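/- Let f be a binary octavic over a field k with char k ∉ {2,3,5,7}, let g = [[a,b],[c,d]] ∈ GL_2(k), set Δ = ad−bc, and let f′ = g(f) be the form obtained by substituting (X,Y) ↦ (aX+bY, cX+dY) in f. Then for every i ∈ {2,3,4,5,6,7,8,9,10}, J_i(f′) = Δ^{4i} · J_i(f). Moreover each J_i, viewed as a polynomial in the coefficients a_0,...,a_8 of f, is homogeneous of degree i with integer coefficients. -/

import Mathlib

noncomputable section

open MvPolynomial


variable {k : Type*} [Field k]

/-- char k not in {2,3,5,7} -/
def CharOK (k : Type*) [Field k] : Prop :=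
  ringChar k ≠ 2 ∧ ringChar k ≠ 3 ∧ ringChar k ≠ 5 ∧ ringChar k ≠ 7

/-- the r-th transvectant of binary forms f, g of degrees n and m -/
def transvectant (n m r : ℕ) (f g : MvPolynomial (Fin 2) k) : MvPolynomial (Fin 2) k :=
  C ((((m - r).factorial * (n - r).factorial : ℕ) : k) /
      ((n.factorial * m.factorial : ℕ) : k)) *
    ∑ j ∈ Finset.range (r + 1),
      C ((-1 : k) ^ j * (r.choose j : k)) *
        ((fun p => pderiv (0 : Fin 2) p)^[r - j] ((fun p => pderiv (1 : Fin 2) p)^[j] f)) *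
        ((fun p => pderiv (0 : Fin 2) p)^[j] ((fun p => pderiv (1 : Fin 2) p)^[r - j] g))

/-- the binary octavic with coefficient vector a -/
def octForm (a : Fin 9 → k) : MvPolynomial (Fin 2) k :=
  ∑ i : Fin 9, C (a i) * X 0 ^ (i : ℕ) * X 1 ^ (8 - (i : ℕ))

def covg (a : Fin 9 → k) := transvectant 8 8 4 (octForm a) (octForm a)
def covk (a : Fin 9 → k) := transvectant 8 8 6 (octForm a) (octForm a)
def covh (a : Fin 9 → k) := transvectant 4 4 2 (covk a) (covk a)
def covm (a : Fin 9 → k) := transvectant 8 4 4 (octForm a) (covk a)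
def covn (a : Fin 9 → k) := transvectant 8 4 4 (octForm a) (covh a)
def covp (a : Fin 9 → k) := transvectant 8 4 4 (covg a) (covk a)
def covq (a : Fin 9 → k) := transvectant 8 4 4 (covg a) (covh a)

def J2 (a : Fin 9 → k) : k :=
  (2 ^ 2 * 5 * 7 : k) * constantCoeff (transvectant 8 8 8 (octForm a) (octForm a))
def J3 (a : Fin 9 → k) : k :=
  ((2 ^ 4 * 5 ^ 2 * 7 ^ 3 : k) / 3) * constantCoeff (transvectant 8 8 8 (octForm a) (covg a))
def J4 (a : Fin 9 → k) : k :=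
  (2 ^ 9 * 3 * 7 ^ 4 : k) * constantCoeff (transvectant 4 4 4 (covk a) (covk a))
def J5 (a : Fin 9 → k) : k :=
  (2 ^ 9 * 5 * 7 ^ 5 : k) * constantCoeff (transvectant 4 4 4 (covm a) (covk a))
def J6 (a : Fin 9 → k) : k :=
  (2 ^ 14 * 3 ^ 2 * 7 ^ 6 : k) * constantCoeff (transvectant 4 4 4 (covk a) (covh a))
def J7 (a : Fin 9 → k) : k :=
  (2 ^ 14 * 3 * 5 * 7 ^ 7 : k) * constantCoeff (transvectant 4 4 4 (covm a) (covh a))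
def J8 (a : Fin 9 → k) : k :=
  (2 ^ 17 * 3 * 5 ^ 2 * 7 ^ 9 : k) * constantCoeff (transvectant 4 4 4 (covp a) (covh a))
def J9 (a : Fin 9 → k) : k :=
  (2 ^ 19 * 3 ^ 2 * 5 * 7 ^ 9 : k) * constantCoeff (transvectant 4 4 4 (covn a) (covh a))
def J10 (a : Fin 9 → k) : k :=
  (2 ^ 22 * 3 ^ 2 * 5 ^ 2 * 7 ^ 11 : k) * constantCoeff (transvectant 4 4 4 (covq a) (covh a))

def Jinv : ℕ → (Fin 9 → k) → k
  | 2 => J2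
  | 3 => J3
  | 4 => J4
  | 5 => J5
  | 6 => J6
  | 7 => J7
  | 8 => J8
  | 9 => J9
  | 10 => J10
  | _ => fun _ => 0

/-- action of a 2x2 matrix on binary forms by substitution (X,Y) ↦ (aX+bY, cX+dY) -/
def substForm (g : Matrix (Fin 2) (Fin 2) k) (p : MvPolynomial (Fin 2) k) :
    MvPolynomial (Fin 2) k :=
  aeval (fun i : Fin 2 => C (g i 0) * X 0 + C (g i 1) * X 1) p

/-- coefficients of the transformed octavic -/
def octAct (g : Matrix (Fin 2) (Fin 2) k) (a : Fin 9 → k) : Fin 9 → k := fun i =>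
  coeff (Finsupp.single (0 : Fin 2) (i : ℕ) + Finsupp.single (1 : Fin 2) (8 - (i : ℕ)))
    (substForm g (octForm a))

/-!
A transvectant of `p` and `q` is a multiple of `Ω^r (p ⊗ q)` restricted to the diagonal, where
Cayley's operator `Ω = ∂/∂X ⊗ ∂/∂Y - ∂/∂Y ⊗ ∂/∂X` commutes with a simultaneous linear substitution
up to its determinant. Counting the factors gives the transformation law of `J_i`. Bilinearity of
the transvectants shows that `J_i` is multiplied by `t ^ i` when the octavic is multiplied by `t`,
which over an infinite field forces homogeneity of degree `i`.

For integrality, write forms with normalized coefficients, `∑ C(n, i) α_i X^i Y^(n-i)`. Then a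
derivative only shifts `α`, the full contraction of two forms of degree `r` is
`∑ (-1)^s C(r, s) α_{r-s} β_s`, and the denominators in `g`, `κ`, `h` and `m` become visible.
Suitable multiples of these covariants have integral coefficients, and each `J_i` is an integral
expression in them.
-/

section Polynomials

variable {σ τ R : Type*} [CommRing R]

lemma commute_pderiv (i j : σ) :
    Commute (pderiv (R := R) i).toLinearMap (pderiv (R := R) j).toLinearMap := by
  classical
  have h : ⁅pderiv (R := R) i, pderiv (R := R) j⁆ = 0 := by
    ext l
    simp [Derivation.commutator_apply, pderiv_X, Pi.single_apply, apply_ite]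
  exact LinearMap.ext fun p => sub_eq_zero.1 (Derivation.congr_fun h p)

lemma pderiv_aeval [Fintype σ] (i : τ) (f : σ → MvPolynomial τ R) (p : MvPolynomial σ R) :
    pderiv i (aeval f p) = ∑ j, pderiv i (f j) * aeval f (pderiv j p) := by
  classical
  induction p using MvPolynomial.induction_on with
  | C r => simp [algebraMap_eq]
  | add p q hp hq => simp only [map_add, hp, hq, mul_add, Finset.sum_add_distrib]
  | mul_X p l hp =>
    simp only [map_mul, Derivation.leibniz, hp, map_add, smul_eq_mul, aeval_X, pderiv_X,
      Pi.single_apply, mul_add, Finset.sum_add_distrib, Finset.mul_sum]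
    simp [apply_ite (aeval f), mul_comm, mul_assoc, -aeval_eq_bind₁]

lemma isHomogeneous_of_eval_smul [IsDomain R] [Infinite R] {P : MvPolynomial σ R} {n : ℕ}
    (h : ∀ (t : R) (x : σ → R), eval (t • x) P = t ^ n * eval x P) : P.IsHomogeneous n := by
  classical
  intro d hd
  have hscale (t : R) : ∑ e ∈ P.support, monomial e (t ^ e.degree * coeff e P) = C (t ^ n) * P := by
    refine MvPolynomial.funext fun x => ?_
    rw [map_mul, eval_C, ← h, map_sum, eval_eq]
    refine Finset.sum_congr rfl fun e _ => ?_
    simp only [eval_monomial, Finsupp.prod, Pi.smul_apply, smul_eq_mul, mul_pow,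
      Finset.prod_mul_distrib, Finset.prod_pow_eq_pow_sum, Finsupp.degree_apply]
    ring
  have hcoeff (t : R) : t ^ d.degree * coeff d P = t ^ n * coeff d P := by
    simpa only [coeff_sum, coeff_monomial, coeff_C_mul, Finset.sum_ite_eq', mem_support_iff, ne_eq,
      hd, not_false_eq_true, if_true] using congrArg (coeff d) (hscale t)
  have hpow : (Polynomial.X ^ d.degree : Polynomial R) = Polynomial.X ^ n :=
    Polynomial.funext fun t => by simpa using mul_right_cancel₀ hd (hcoeff t)
  have hdeg : d.degree = n := by simpa using congrArg Polynomial.natDegree hpow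
  exact (DFunLike.congr_fun Finsupp.degree_eq_weight_one d).symm.trans hdeg

end Polynomials

section CayleyOmega

open TensorProduct

variable {R : Type*} [CommRing R]

/-- Cayley's operator `Ω = ∂/∂X ⊗ ∂/∂Y - ∂/∂Y ⊗ ∂/∂X` on pairs of binary forms. -/
def cayleyOmega (R : Type*) [CommRing R] :
    Module.End R (MvPolynomial (Fin 2) R ⊗[R] MvPolynomial (Fin 2) R) :=
  TensorProduct.map (pderiv 0).toLinearMap (pderiv 1).toLinearMap -
    TensorProduct.map (pderiv 1).toLinearMap (pderiv 0).toLinearMap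

/-- The `r`-th Ω-process `p, q ↦ mul (Ω ^ r (p ⊗ q))`, that is the transvectant without its
numerical factor. -/
def omegaProcess (r : ℕ) (p q : MvPolynomial (Fin 2) R) : MvPolynomial (Fin 2) R :=
  LinearMap.mul' R _ ((cayleyOmega R ^ r) (p ⊗ₜ q))

lemma iterate_pderiv (i : Fin 2) (s : ℕ) (p : MvPolynomial (Fin 2) R) :
    (fun p => pderiv i p)^[s] p = ((pderiv i).toLinearMap ^ s : Module.End R _) p := by
  rw [Module.End.pow_apply]
  rfl

lemma omegaProcess_eq_sum (r : ℕ) (p q : MvPolynomial (Fin 2) R) :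
    omegaProcess r p q = ∑ j ∈ Finset.range (r + 1), C ((-1) ^ j * (r.choose j : R)) *
      ((fun p => pderiv 0 p)^[r - j] ((fun p => pderiv 1 p)^[j] p)) *
      ((fun p => pderiv 0 p)^[j] ((fun p => pderiv 1 p)^[r - j] q)) := by
  let dX : Module.End R (MvPolynomial (Fin 2) R) := (pderiv 0).toLinearMap
  let dY : Module.End R (MvPolynomial (Fin 2) R) := (pderiv 1).toLinearMap
  have hcomm : Commute dX dY := commute_pderiv 0 1
  have hΩ : cayleyOmega R = (-1 : R) • TensorProduct.map dY dX + TensorProduct.map dX dY := by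
    rw [cayleyOmega]
    module
  have hcommΩ : Commute ((-1 : R) • (TensorProduct.map dY dX : Module.End R _))
      (TensorProduct.map dX dY) := by
    refine Commute.smul_left ?_ _
    rw [commute_iff_eq, ← TensorProduct.map_mul, ← TensorProduct.map_mul, hcomm.eq]
  rw [omegaProcess, hΩ, hcommΩ.add_pow, LinearMap.sum_apply, map_sum]
  refine Finset.sum_congr rfl fun j _ => ?_
  have hswap : (dX ^ (r - j)) ((dY ^ j) p) = (dY ^ j) ((dX ^ (r - j)) p) :=
    LinearMap.congr_fun (hcomm.pow_pow (r - j) j).eq p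
  simp only [iterate_pderiv, smul_pow, TensorProduct.map_pow, Module.End.mul_apply,
    Module.End.natCast_apply, LinearMap.smul_apply, map_nsmul, map_smul, TensorProduct.map_tmul,
    LinearMap.mul'_apply]
  rw [← hswap, smul_eq_C_mul, nsmul_eq_mul, map_mul, map_natCast]
  ring

lemma omegaProcess_smul_smul (r : ℕ) (s t : R) (p q : MvPolynomial (Fin 2) R) :
    omegaProcess r (s • p) (t • q) = (s * t) • omegaProcess r p q := by
  rw [omegaProcess, TensorProduct.smul_tmul_smul, map_smul, map_smul, omegaProcess]

/-- `substForm` over a commutative ring, as an algebra homomorphism. -/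
def substHom (g : Matrix (Fin 2) (Fin 2) R) :
    MvPolynomial (Fin 2) R →ₐ[R] MvPolynomial (Fin 2) R :=
  aeval fun i => C (g i 0) * X 0 + C (g i 1) * X 1

lemma substHom_one (p : MvPolynomial (Fin 2) R) : substHom 1 p = p := by
  have h : substHom (1 : Matrix (Fin 2) (Fin 2) R) = AlgHom.id R _ := by
    ext i
    fin_cases i <;> simp [substHom]
  rw [h, AlgHom.id_apply]

variable (g : Matrix (Fin 2) (Fin 2) R)

lemma pderiv_substHom (i : Fin 2) (p : MvPolynomial (Fin 2) R) :
    pderiv i (substHom g p) =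
      g 0 i • substHom g (pderiv 0 p) + g 1 i • substHom g (pderiv 1 p) := by
  rw [substHom, pderiv_aeval, Fin.sum_univ_two]
  fin_cases i <;> simp [smul_eq_C_mul, -aeval_eq_bind₁]

lemma constantCoeff_substHom (p : MvPolynomial (Fin 2) R) :
    constantCoeff (substHom g p) = constantCoeff p := by
  have h : ((aeval (fun _ => (0 : R))).comp (substHom g)) = aeval fun _ => (0 : R) := by
    ext i
    simp [substHom]
  simpa [aeval_zero'] using AlgHom.congr_fun h p

lemma isHomogeneous_substHom {n : ℕ} {p : MvPolynomial (Fin 2) R} (hp : p.IsHomogeneous n) :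
    (substHom g p).IsHomogeneous n := by
  have hX (i : Fin 2) : (C (g i 0) * X (0 : Fin 2) + C (g i 1) * X 1).IsHomogeneous 1 :=
    (isHomogeneous_C_mul_X (g i 0) 0).add (isHomogeneous_C_mul_X (g i 1) 1)
  simpa [substHom, -aeval_eq_bind₁] using hp.aeval _ hX

lemma cayleyOmega_comp_substHom :
    cayleyOmega R ∘ₗ TensorProduct.map (substHom g).toLinearMap (substHom g).toLinearMap =
      g.det • TensorProduct.map (substHom g).toLinearMap (substHom g).toLinearMap ∘ₗ
        cayleyOmega R := by
  refine TensorProduct.ext' fun p q => ?_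
  simp only [cayleyOmega, LinearMap.comp_apply, LinearMap.smul_apply, TensorProduct.map_tmul,
    LinearMap.sub_apply, AlgHom.toLinearMap_apply, Derivation.coeFn_coe, pderiv_substHom, map_sub,
    Matrix.det_fin_two, TensorProduct.add_tmul, TensorProduct.tmul_add,
    TensorProduct.smul_tmul_smul]
  module

lemma cayleyOmega_pow_substHom (r : ℕ) (z : MvPolynomial (Fin 2) R ⊗[R] MvPolynomial (Fin 2) R) :
    (cayleyOmega R ^ r)
        (TensorProduct.map (substHom g).toLinearMap (substHom g).toLinearMap z) =
      g.det ^ r • TensorProduct.map (substHom g).toLinearMap (substHom g).toLinearMap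
        ((cayleyOmega R ^ r) z) := by
  induction r generalizing z with
  | zero => simp
  | succ r ih =>
    have h := LinearMap.congr_fun (cayleyOmega_comp_substHom g) z
    simp only [LinearMap.comp_apply, LinearMap.smul_apply] at h
    simp only [pow_succ (cayleyOmega R), Module.End.mul_apply, h, map_smul, ih, smul_smul,
      pow_succ']

lemma omegaProcess_substHom (r : ℕ) (p q : MvPolynomial (Fin 2) R) :
    omegaProcess r (substHom g p) (substHom g q) = g.det ^ r • substHom g (omegaProcess r p q) := by
  have hmul : LinearMap.mul' R _ ∘ₗ
      TensorProduct.map (substHom g).toLinearMap (substHom g).toLinearMap =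
      (substHom g).toLinearMap ∘ₗ LinearMap.mul' R _ := by
    refine TensorProduct.ext' fun p q => ?_
    simp
  have h := cayleyOmega_pow_substHom g r (p ⊗ₜ q)
  rw [TensorProduct.map_tmul] at h
  rw [omegaProcess, omegaProcess, ← AlgHom.toLinearMap_apply, ← AlgHom.toLinearMap_apply, h,
    map_smul]
  exact congrArg _ (LinearMap.congr_fun hmul _)

end CayleyOmega

section Equivariance

variable (g : Matrix (Fin 2) (Fin 2) k)

lemma transvectant_eq_smul_omegaProcess (n m r : ℕ) (p q : MvPolynomial (Fin 2) k) :
    transvectant n m r p q =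
      ((((m - r).factorial * (n - r).factorial : ℕ) : k) /
        ((n.factorial * m.factorial : ℕ) : k)) • omegaProcess r p q := by
  rw [transvectant, omegaProcess_eq_sum, smul_eq_C_mul]

lemma transvectant_smul_substHom (n m r : ℕ) (s t : k) (p q : MvPolynomial (Fin 2) k) :
    transvectant n m r (s • substHom g p) (t • substHom g q) =
      (s * t * g.det ^ r) • substHom g (transvectant n m r p q) := by
  simp only [transvectant_eq_smul_omegaProcess, omegaProcess_smul_smul, omegaProcess_substHom,
    map_smul, smul_smul]
  congr 1
  ring

lemma isHomogeneous_octForm (a : Fin 9 → k) : (octForm a).IsHomogeneous 8 := by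
  refine IsHomogeneous.sum _ _ _ fun i _ => ?_
  have h := (isHomogeneous_C_mul_X_pow (a i) (0 : Fin 2) i).mul
    (isHomogeneous_X_pow (R := k) (1 : Fin 2) (8 - i))
  rwa [Nat.add_sub_cancel' (Nat.le_of_lt_succ i.isLt)] at h

lemma octForm_coeff_of_isHomogeneous {p : MvPolynomial (Fin 2) k} (hp : p.IsHomogeneous 8) :
    octForm (fun i => coeff (Finsupp.single 0 (i : ℕ) + Finsupp.single 1 (8 - (i : ℕ))) p) = p := by
  have hmonomial (c : k) (i j : ℕ) : C c * X (0 : Fin 2) ^ i * X (1 : Fin 2) ^ j =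
      monomial (Finsupp.single 0 i + Finsupp.single 1 j) c := by
    rw [X_pow_eq_monomial, X_pow_eq_monomial, C_mul_monomial, monomial_mul, mul_one, mul_one]
  ext d
  simp only [octForm, hmonomial, coeff_sum, coeff_monomial]
  by_cases hd : d 0 + d 1 = 8
  · have hexp : Finsupp.single (0 : Fin 2) (d 0) + Finsupp.single 1 (8 - d 0) = d := by
      ext i
      fin_cases i
      · simp
      · simpa using by omega
    rw [Finset.sum_eq_single (⟨d 0, by omega⟩ : Fin 9) _ (by simp), hexp, if_pos rfl]
    rintro i - hi
    refine if_neg fun h => hi (Fin.ext ?_)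
    simp [← h]
  · rw [hp.coeff_eq_zero (by rwa [Finsupp.degree_eq_sum, Fin.sum_univ_two])]
    refine Finset.sum_eq_zero fun i _ => if_neg ?_
    rintro rfl
    exact hd (by simpa using Nat.add_sub_cancel' (Nat.le_of_lt_succ i.isLt))

lemma octForm_octAct (a : Fin 9 → k) : octForm (octAct g a) = substHom g (octForm a) :=
  octForm_coeff_of_isHomogeneous (isHomogeneous_substHom g (isHomogeneous_octForm a))

lemma octForm_smul (t : k) (a : Fin 9 → k) : octForm (t • a) = t • octForm a := by
  simp [octForm, Finset.smul_sum, smul_eq_C_mul, mul_assoc]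

variable {g}

/- With `t = 1` this is the transformation law of `Jinv i` under substitutions, and with `g = 1` its
homogeneity in the coefficients. -/
lemma Jinv_of_octForm_eq {t : k} {a b : Fin 9 → k}
    (hb : octForm b = t • substHom g (octForm a)) (i : ℕ) :
    Jinv i b = t ^ i * g.det ^ (4 * i) * Jinv i a := by
  have hg : covg b = (t ^ 2 * g.det ^ 4) • substHom g (covg a) := by
    rw [covg, covg, hb, transvectant_smul_substHom, sq]
  have hκ : covk b = (t ^ 2 * g.det ^ 6) • substHom g (covk a) := by
    rw [covk, covk, hb, transvectant_smul_substHom, sq]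
  have hh : covh b = (t ^ 4 * g.det ^ 14) • substHom g (covh a) := by
    rw [covh, covh, hκ, transvectant_smul_substHom]
    ring_nf
  have hm : covm b = (t ^ 3 * g.det ^ 10) • substHom g (covm a) := by
    rw [covm, covm, hb, hκ, transvectant_smul_substHom]
    ring_nf
  have hn : covn b = (t ^ 5 * g.det ^ 18) • substHom g (covn a) := by
    rw [covn, covn, hb, hh, transvectant_smul_substHom]
    ring_nf
  have hp : covp b = (t ^ 4 * g.det ^ 14) • substHom g (covp a) := by
    rw [covp, covp, hg, hκ, transvectant_smul_substHom]
    ring_nf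
  have hq : covq b = (t ^ 6 * g.det ^ 22) • substHom g (covq a) := by
    rw [covq, covq, hg, hh, transvectant_smul_substHom]
    ring_nf
  unfold Jinv
  split <;> simp only [J2, J3, J4, J5, J6, J7, J8, J9, J10, hb, hg, hκ, hh, hm, hn, hp, hq,
    transvectant_smul_substHom, constantCoeff_smul, constantCoeff_substHom, smul_eq_mul] <;> ring

lemma Jinv_octAct (g : Matrix (Fin 2) (Fin 2) k) (i : ℕ) (a : Fin 9 → k) :
    Jinv i (octAct g a) = g.det ^ (4 * i) * Jinv i a := by
  simpa using Jinv_of_octForm_eq (t := 1) ((octForm_octAct g a).trans (one_smul k _).symm) i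

lemma Jinv_smul (i : ℕ) (t : k) (a : Fin 9 → k) : Jinv i (t • a) = t ^ i * Jinv i a := by
  simpa using Jinv_of_octForm_eq (g := 1) ((octForm_smul t a).trans (by rw [substHom_one])) i

end Equivariance

section BinaryForms

open Finset.HasAntidiagonal (antidiagonal mem_antidiagonal)

variable {R : Type*} [CommRing R]

/-- The binary form of degree `n` with normalized coefficients `α`: the coefficient of
`X ^ i * Y ^ (n - i)` is `n.choose i * α i`. -/
def binForm (n : ℕ) (α : ℕ → R) : MvPolynomial (Fin 2) R :=
  ∑ i ∈ Finset.range (n + 1), C (n.choose i * α i) * X 0 ^ i * X 1 ^ (n - i)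

lemma pderiv_zero_binForm (n : ℕ) (α : ℕ → R) :
    pderiv 0 (binForm n α) = (n : R) • binForm (n - 1) fun i => α (i + 1) := by
  obtain - | n := n
  · simp [binForm]
  rw [binForm, binForm, map_sum, Finset.sum_range_succ', Finset.smul_sum, Nat.add_sub_cancel]
  simp only [pow_zero, mul_one, Derivation.leibniz, Derivation.leibniz_pow, pderiv_C, pderiv_X_self,
    pderiv_X_of_ne (show (1 : Fin 2) ≠ 0 by decide), smul_zero, zero_add, add_zero]
  refine Finset.sum_congr rfl fun i _ => ?_
  have h := congrArg (Nat.cast (R := MvPolynomial (Fin 2) R)) (Nat.add_one_mul_choose_eq n i)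
  push_cast at h
  simp only [smul_eq_C_mul, smul_eq_mul, nsmul_eq_mul, map_mul, map_natCast, Nat.add_sub_cancel,
    mul_one]
  push_cast
  linear_combination (-(C (α (i + 1))) * X 0 ^ i * X 1 ^ (n - i)) * h

lemma pderiv_one_binForm (n : ℕ) (α : ℕ → R) :
    pderiv 1 (binForm n α) = (n : R) • binForm (n - 1) α := by
  obtain - | n := n
  · simp [binForm]
  rw [binForm, binForm, map_sum, Finset.sum_range_succ, Finset.smul_sum, Nat.add_sub_cancel]
  simp only [Nat.sub_self, pow_zero, mul_one, Derivation.leibniz, Derivation.leibniz_pow, pderiv_C,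
    pderiv_X_self, pderiv_X_of_ne (show (0 : Fin 2) ≠ 1 by decide), smul_zero, add_zero]
  refine Finset.sum_congr rfl fun i hi => ?_
  have hin : i ≤ n := Nat.le_of_lt_succ (Finset.mem_range.1 hi)
  have h := congrArg (Nat.cast (R := MvPolynomial (Fin 2) R)) (Nat.choose_mul_succ_eq n i)
  rw [Nat.sub_add_comm hin] at h ⊢
  push_cast at h
  simp only [smul_eq_C_mul, smul_eq_mul, nsmul_eq_mul, map_mul, map_natCast, Nat.add_sub_cancel,
    mul_one]
  push_cast
  linear_combination (-(C (α i)) * X 0 ^ i * X 1 ^ (n - i)) * h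

lemma iterate_pderiv_zero_binForm (s n : ℕ) (α : ℕ → R) :
    (fun p => pderiv 0 p)^[s] (binForm n α) =
      (n.descFactorial s : R) • binForm (n - s) fun i => α (i + s) := by
  induction s with
  | zero => simp
  | succ s ih =>
    rw [Function.iterate_succ_apply', ih, Derivation.map_smul, pderiv_zero_binForm, smul_smul,
      Nat.descFactorial_succ, Nat.cast_mul, mul_comm, Nat.sub_sub]
    simp only [add_right_comm, add_assoc]

lemma iterate_pderiv_one_binForm (s n : ℕ) (α : ℕ → R) :
    (fun p => pderiv 1 p)^[s] (binForm n α) = (n.descFactorial s : R) • binForm (n - s) α := by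
  induction s with
  | zero => simp
  | succ s ih =>
    rw [Function.iterate_succ_apply', ih, Derivation.map_smul, pderiv_one_binForm, smul_smul,
      Nat.descFactorial_succ, Nat.cast_mul, mul_comm, Nat.sub_sub]

/-- The pairing of two binary forms of degree `r`, given by their normalized coefficients, which is
their full contraction `(f, g)^r`. -/
def apolarPairing (r : ℕ) (α β : ℕ → R) : R :=
  ∑ s ∈ Finset.range (r + 1), (-1) ^ s * r.choose s * α (r - s) * β s

/-- The plain coefficient of `X ^ l * Y ^ (p + q - l)` in the `r`-th transvectant of the forms of
degrees `p + r` and `q + r` with normalized coefficients `α` and `β`. -/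
def transvectantSum (p q r : ℕ) (α β : ℕ → R) (l : ℕ) : R :=
  ∑ x ∈ antidiagonal l,
    p.choose x.1 * q.choose x.2 * apolarPairing r (fun i => α (i + x.1)) fun j => β (j + x.2)

lemma binForm_mul_binForm (p q : ℕ) (u v : ℕ → R) :
    binForm p u * binForm q v = ∑ l ∈ Finset.range (p + q + 1),
      C (∑ x ∈ antidiagonal l,
        p.choose x.1 * q.choose x.2 * (u x.1 * v x.2)) * X 0 ^ l * X 1 ^ (p + q - l) := by
  rw [binForm, binForm, Finset.sum_mul_sum, ← Finset.sum_product',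
    ← Finset.sum_fiberwise_of_maps_to (t := Finset.range (p + q + 1)) (g := fun x => x.1 + x.2)
      (fun x hx => by simp only [Finset.mem_product, Finset.mem_range] at hx ⊢; omega)]
  refine Finset.sum_congr rfl fun l _ => ?_
  rw [map_sum, Finset.sum_mul, Finset.sum_mul]
  refine Finset.sum_subset_zero_on_sdiff ?_ ?_ ?_
  · intro x hx
    exact mem_antidiagonal.2 (Finset.mem_filter.1 hx).2
  · intro x hx
    simp only [Finset.mem_sdiff, Finset.mem_filter, Finset.mem_product, Finset.mem_range,
      mem_antidiagonal] at hx
    have h : p < x.1 ∨ q < x.2 := by omega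
    obtain h | h := h <;> simp [Nat.choose_eq_zero_of_lt h]
  · intro x hx
    simp only [Finset.mem_filter, Finset.mem_product, Finset.mem_range] at hx
    obtain ⟨⟨hp, hq⟩, rfl⟩ := hx
    have h : p + q - (x.1 + x.2) = (p - x.1) + (q - x.2) := by omega
    rw [h, pow_add, pow_add]
    simp only [map_mul]
    ring

end BinaryForms

section BinaryTransvectants

open Finset.HasAntidiagonal (antidiagonal)

lemma iterate_pderiv_binForm {R : Type*} [CommRing R] (s j n : ℕ) (α : ℕ → R) :
    (fun p => pderiv 0 p)^[s] ((fun p => pderiv 1 p)^[j] (binForm n α)) =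
      (n.descFactorial (j + s) : R) • binForm (n - (j + s)) fun i => α (i + s) := by
  have hsmul (c : R) (p : MvPolynomial (Fin 2) R) :
      (fun p => pderiv 0 p)^[s] (c • p) = c • (fun p => pderiv 0 p)^[s] p := by
    simp only [iterate_pderiv, map_smul]
  rw [iterate_pderiv_one_binForm, hsmul, iterate_pderiv_zero_binForm, smul_smul, Nat.sub_sub,
    ← Nat.cast_mul, mul_comm, ← Nat.descFactorial_mul_descFactorial (Nat.le_add_right j s),
    Nat.add_sub_cancel_left]

lemma factorial_ne_zero_of_le {R : Type*} [Semiring R] {m n : ℕ} (hn : (n.factorial : R) ≠ 0)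
    (hmn : m ≤ n) : (m.factorial : R) ≠ 0 := fun hm =>
  hn (zero_dvd_iff.1 (hm ▸ Nat.cast_dvd_cast (Nat.factorial_dvd_factorial hmn)))

lemma choose_ne_zero_of_factorial_ne_zero {R : Type*} [Semiring R] {n l : ℕ}
    (hn : (n.factorial : R) ≠ 0) (hl : l ≤ n) : (n.choose l : R) ≠ 0 := fun h => hn <| by
  rw [← Nat.choose_mul_factorial_mul_factorial hl, Nat.cast_mul, Nat.cast_mul, h, zero_mul,
    zero_mul]

lemma transvectant_binForm_eq_sum {p q r : ℕ} (hp : ((p + r).factorial : k) ≠ 0)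
    (hq : ((q + r).factorial : k) ≠ 0) (α β : ℕ → k) :
    transvectant (p + r) (q + r) r (binForm (p + r) α) (binForm (q + r) β) =
      ∑ j ∈ Finset.range (r + 1), C ((-1) ^ j * (r.choose j : k)) *
        binForm p (fun i => α (i + (r - j))) * binForm q (fun i => β (i + j)) := by
  rw [transvectant, Finset.mul_sum]
  refine Finset.sum_congr rfl fun j hj => ?_
  have hjr : j ≤ r := Nat.le_of_lt_succ (Finset.mem_range.1 hj)
  have hfac (n : ℕ) : (n.factorial * (n + r).descFactorial r : k) = (n + r).factorial := by
    have h := Nat.factorial_mul_descFactorial (Nat.le_add_left r n)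
    rw [Nat.add_sub_cancel] at h
    rw [← h, Nat.cast_mul]
  have hscale : ((q.factorial * p.factorial : ℕ) : k) /
      ((p + r).factorial * (q + r).factorial : ℕ) *
        ((p + r).descFactorial r * (q + r).descFactorial r) = 1 := by
    push_cast
    rw [div_mul_eq_mul_div, div_eq_one_iff_eq (mul_ne_zero hp hq), ← hfac, ← hfac]
    ring
  rw [iterate_pderiv_binForm, iterate_pderiv_binForm, Nat.add_sub_cancel' hjr,
    Nat.sub_add_cancel hjr, Nat.add_sub_cancel, Nat.add_sub_cancel]
  have hC := congrArg (C (σ := Fin 2)) hscale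
  simp only [smul_eq_C_mul, map_mul, map_one] at hC ⊢
  linear_combination (C ((-1) ^ j) * C (r.choose j : k) * binForm p (fun i => α (i + (r - j))) *
    binForm q fun i => β (i + j)) * hC

/-- The normalized coefficients of the `r`-th transvectant of the forms of degrees `p + r` and
`q + r` with normalized coefficients `α` and `β`. -/
def transvectantCoeff (p q r : ℕ) (α β : ℕ → k) (l : ℕ) : k :=
  transvectantSum p q r α β l / (p + q).choose l

theorem transvectant_binForm {p q r : ℕ} (hp : ((p + r).factorial : k) ≠ 0)
    (hq : ((q + r).factorial : k) ≠ 0) (hpq : ((p + q).factorial : k) ≠ 0) (α β : ℕ → k) :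
    transvectant (p + r) (q + r) r (binForm (p + r) α) (binForm (q + r) β) =
      binForm (p + q) (transvectantCoeff p q r α β) := by
  rw [transvectant_binForm_eq_sum hp hq, binForm]
  simp only [mul_assoc, binForm_mul_binForm, Finset.mul_sum]
  rw [Finset.sum_comm]
  refine Finset.sum_congr rfl fun l hl => ?_
  have hchoose : ((p + q).choose l : k) ≠ 0 :=
    choose_ne_zero_of_factorial_ne_zero hpq (Nat.le_of_lt_succ (Finset.mem_range.1 hl))
  rw [transvectantCoeff, mul_div_cancel₀ _ hchoose, transvectantSum]
  simp only [apolarPairing, Finset.mul_sum]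
  rw [Finset.sum_comm]
  simp only [map_sum, Finset.sum_mul, Finset.mul_sum]
  refine Finset.sum_congr rfl fun j _ => Finset.sum_congr rfl fun x _ => ?_
  rw [add_comm (r - j), add_comm j]
  simp only [map_mul]
  ring

lemma constantCoeff_transvectant_binForm {r : ℕ} (hr : (r.factorial : k) ≠ 0) (α β : ℕ → k) :
    constantCoeff (transvectant r r r (binForm r α) (binForm r β)) = apolarPairing r α β := by
  have h := transvectant_binForm (p := 0) (q := 0) (r := r) (by simpa) (by simpa) (by simp) α β
  simp only [zero_add] at h
  rw [h]
  simp [binForm, transvectantCoeff, transvectantSum]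

lemma transvectantCoeff_zero_right {p l : ℕ} (hl : (p.choose l : k) ≠ 0) (r : ℕ) (α β : ℕ → k) :
    transvectantCoeff p 0 r α β l = apolarPairing r (fun i => α (i + l)) β := by
  rw [transvectantCoeff, transvectantSum, Finset.sum_eq_single (l, 0)]
  · simp [hl]
  · rintro ⟨i, j⟩ hij hne
    have hj : 0 < j := by
      rw [Finset.HasAntidiagonal.mem_antidiagonal] at hij
      by_contra! hj
      obtain rfl := Nat.le_zero.1 hj
      exact hne (Prod.ext hij rfl)
    simp [Nat.choose_eq_zero_of_lt hj]
  · simp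

lemma constantCoeff_transvectant_transvectant_binForm {r s : ℕ}
    (hrs : ((s + r).factorial : k) ≠ 0) (α β γ : ℕ → k) :
    constantCoeff (transvectant s s s
      (transvectant (s + r) r r (binForm (s + r) α) (binForm r β)) (binForm s γ)) =
      apolarPairing s (fun l => apolarPairing r (fun i => α (i + l)) β) γ := by
  have hr : (r.factorial : k) ≠ 0 := factorial_ne_zero_of_le hrs (Nat.le_add_left r s)
  have hs : (s.factorial : k) ≠ 0 := factorial_ne_zero_of_le hrs (Nat.le_add_right s r)
  have h := transvectant_binForm (p := s) (q := 0) (r := r) hrs (by simpa) hs α β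
  simp only [zero_add, add_zero] at h
  rw [h, constantCoeff_transvectant_binForm hs]
  refine Finset.sum_congr rfl fun j _ => ?_
  rw [transvectantCoeff_zero_right (choose_ne_zero_of_factorial_ne_zero hs (Nat.sub_le s j))]

end BinaryTransvectants

section IntegralFormulas

variable {R S : Type*} [CommRing R] [CommRing S]

/-- The coefficients of the octavic with normalized coefficients `α`. -/
def octavicCoeff (α : ℕ → R) : Fin 9 → R := fun i => (8).choose i * α i

/-- The `p₀, ..., p₄` for which `p₀ Y⁴ + 2 p₁ X Y³ + p₂ X² Y² + 2 p₃ X³ Y + p₄ X⁴` is the quartic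
with normalized coefficients `u`. -/
def quarticCoeff (u : ℕ → R) : Fin 5 → R := ![u 0, 2 * u 1, 6 * u 2, 2 * u 3, u 4]

/-- The `G₀, ..., G₈` for which `G₀ Y⁸ + 4 G₁ X Y⁷ + 2 G₂ X² Y⁶ + 4 G₃ X³ Y⁵ + G₄ X⁴ Y⁴ +
4 G₅ X⁵ Y³ + 2 G₆ X⁶ Y² + 4 G₇ X⁷ Y + G₈ X⁸` is the octavic with normalized coefficients `γ`. -/
def reducedOctavicCoeff (γ : ℕ → R) : Fin 9 → R :=
  ![γ 0, 2 * γ 1, 14 * γ 2, 14 * γ 3, 70 * γ 4, 14 * γ 5, 14 * γ 6, 2 * γ 7, γ 8]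

/-- The coefficients of `784 κ = K₀ Y⁴ + 2 K₁ X Y³ + K₂ X² Y² + 2 K₃ X³ Y + K₄ X⁴`. -/
def kappaCoeff (b : Fin 9 → R) : Fin 5 → R :=
  ![56 * b 0 * b 6 - 21 * b 1 * b 5 + 12 * b 2 * b 4 - 5 * b 3 ^ 2,
    196 * b 0 * b 7 - 35 * b 1 * b 6 + 9 * b 2 * b 5 - 2 * b 3 * b 4,
    1568 * b 0 * b 8 - 49 * b 1 * b 7 - 16 * b 2 * b 6 + 17 * b 3 * b 5 - 8 * b 4 ^ 2,
    196 * b 1 * b 8 - 35 * b 2 * b 7 + 9 * b 3 * b 6 - 2 * b 4 * b 5,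
    56 * b 2 * b 8 - 21 * b 3 * b 7 + 12 * b 4 * b 6 - 5 * b 5 ^ 2]

/-- The coefficients of `1960 g = G₀ Y⁸ + 4 G₁ X Y⁷ + 2 G₂ X² Y⁶ + 4 G₃ X³ Y⁵ + G₄ X⁴ Y⁴ +
4 G₅ X⁵ Y³ + 2 G₆ X⁶ Y² + 4 G₇ X⁷ Y + G₈ X⁸`. -/
def gCoeff (b : Fin 9 → R) : Fin 9 → R :=
  ![56 * b 0 * b 4 - 35 * b 1 * b 3 + 15 * b 2 ^ 2,
    70 * b 0 * b 5 - 21 * b 1 * b 4 + 5 * b 2 * b 3,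
    420 * b 0 * b 6 - 35 * b 1 * b 5 - 22 * b 2 * b 4 + 15 * b 3 ^ 2,
    490 * b 0 * b 7 + 35 * b 1 * b 6 - 30 * b 2 * b 5 + 9 * b 3 * b 4,
    3920 * b 0 * b 8 + 735 * b 1 * b 7 - 110 * b 2 * b 6 - 45 * b 3 * b 5 + 36 * b 4 ^ 2,
    490 * b 1 * b 8 + 35 * b 2 * b 7 - 30 * b 3 * b 6 + 9 * b 4 * b 5,
    420 * b 2 * b 8 - 35 * b 3 * b 7 - 22 * b 4 * b 6 + 15 * b 5 ^ 2,
    70 * b 3 * b 8 - 21 * b 4 * b 7 + 5 * b 5 * b 6,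
    56 * b 4 * b 8 - 35 * b 5 * b 7 + 15 * b 6 ^ 2]

/-- The coefficients of `2⁹ · 3 · 7⁴ h = H₀ Y⁴ + 2 H₁ X Y³ + H₂ X² Y² + 2 H₃ X³ Y + H₄ X⁴`, where
`K` is `kappaCoeff b`. -/
def hCoeff (K : Fin 5 → R) : Fin 5 → R :=
  ![2 * K 0 * K 2 - 3 * K 1 ^ 2,
    6 * K 0 * K 3 - K 1 * K 2,
    12 * K 0 * K 4 + 6 * K 1 * K 3 - K 2 ^ 2,
    6 * K 1 * K 4 - K 2 * K 3,
    2 * K 2 * K 4 - 3 * K 3 ^ 2]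

/-- The coefficients of `27440 m = M₀ Y⁴ + 2 M₁ X Y³ + 3 M₂ X² Y² + 2 M₃ X³ Y + M₄ X⁴`. -/
def mCoeff (b : Fin 9 → R) : Fin 5 → R :=
  ![3920 * b 0 * b 2 * b 8 - 980 * b 0 * b 3 * b 7 + 448 * b 0 * b 4 * b 6 - 175 * b 0 * b 5 ^ 2 -
      1715 * b 1 ^ 2 * b 8 + 245 * b 1 * b 2 * b 7 - 35 * b 1 * b 3 * b 6 + 7 * b 1 * b 4 * b 5 -
      20 * b 2 ^ 2 * b 6 + 10 * b 2 * b 3 * b 5 - 4 * b 2 * b 4 ^ 2,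
    1960 * b 0 * b 3 * b 8 - 392 * b 0 * b 4 * b 7 + 70 * b 0 * b 5 * b 6 - 490 * b 1 * b 2 * b 8 -
      245 * b 1 * b 3 * b 7 + 175 * b 1 * b 4 * b 6 - 70 * b 1 * b 5 ^ 2 + 175 * b 2 ^ 2 * b 7 -
      65 * b 2 * b 3 * b 6 + 7 * b 2 * b 4 * b 5 + 15 * b 3 ^ 2 * b 5 - 6 * b 3 * b 4 ^ 2,
    1568 * b 0 * b 4 * b 8 - 490 * b 0 * b 5 * b 7 + 140 * b 0 * b 6 ^ 2 - 490 * b 1 * b 3 * b 8 -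
      49 * b 1 * b 4 * b 7 + 35 * b 1 * b 5 * b 6 + 140 * b 2 ^ 2 * b 8 + 35 * b 2 * b 3 * b 7 +
      44 * b 2 * b 4 * b 6 - 35 * b 2 * b 5 ^ 2 - 35 * b 3 ^ 2 * b 6 + 27 * b 3 * b 4 * b 5 -
      8 * b 4 ^ 3,
    1960 * b 0 * b 5 * b 8 - 490 * b 0 * b 6 * b 7 - 392 * b 1 * b 4 * b 8 - 245 * b 1 * b 5 * b 7 +
      175 * b 1 * b 6 ^ 2 + 70 * b 2 * b 3 * b 8 + 175 * b 2 * b 4 * b 7 - 65 * b 2 * b 5 * b 6 -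
      70 * b 3 ^ 2 * b 7 + 7 * b 3 * b 4 * b 6 + 15 * b 3 * b 5 ^ 2 - 6 * b 4 ^ 2 * b 5,
    3920 * b 0 * b 6 * b 8 - 1715 * b 0 * b 7 ^ 2 - 980 * b 1 * b 5 * b 8 + 245 * b 1 * b 6 * b 7 +
      448 * b 2 * b 4 * b 8 - 35 * b 2 * b 5 * b 7 - 20 * b 2 * b 6 ^ 2 - 175 * b 3 ^ 2 * b 8 +
      7 * b 3 * b 4 * b 7 + 10 * b 3 * b 5 * b 6 - 4 * b 4 ^ 2 * b 6]

/-- Six times the pairing `(p, q)^4` of quartics written as in `quarticCoeff`. -/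
def quarticPairing (p q : Fin 5 → R) : R :=
  6 * (p 0 * q 4 + p 4 * q 0) - 6 * (p 1 * q 3 + p 3 * q 1) + p 2 * q 2

/-- Twice the pairing `(m, p)^4` of quartics written as in `mCoeff` and `quarticCoeff`. -/
def mPairing (M p : Fin 5 → R) : R :=
  2 * M 0 * p 4 - 2 * M 1 * p 3 + M 2 * p 2 - 2 * M 3 * p 1 + 2 * M 4 * p 0

/-- Seventy times the pairing `(f, g)^8` of an octavic given by its coefficients with an octavic
written as in `reducedOctavicCoeff`. -/
def octavicOctavicPairing (b G : Fin 9 → R) : R :=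
  70 * b 8 * G 0 - 35 * b 7 * G 1 + 5 * b 6 * G 2 - 5 * b 5 * G 3 + b 4 * G 4 - 5 * b 3 * G 5 +
    5 * b 2 * G 6 - 35 * b 1 * G 7 + 70 * b 0 * G 8

/-- Seventy times the pairing `(g, p q)^8` of an octavic written as in `reducedOctavicCoeff` with
the product of two quartics written as in `quarticCoeff`. -/
def octavicPairing (G : Fin 9 → R) (p q : Fin 5 → R) : R :=
  70 * G 0 * p 4 * q 4 - 70 * G 1 * (p 3 * q 4 + p 4 * q 3) +
    5 * G 2 * (p 2 * q 4 + p 4 * q 2 + 4 * p 3 * q 3) -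
    10 * G 3 * (p 1 * q 4 + p 4 * q 1 + p 2 * q 3 + p 3 * q 2) +
    G 4 * (p 0 * q 4 + p 4 * q 0 + 4 * p 1 * q 3 + 4 * p 3 * q 1 + p 2 * q 2) -
    10 * G 5 * (p 0 * q 3 + p 3 * q 0 + p 1 * q 2 + p 2 * q 1) +
    5 * G 6 * (p 0 * q 2 + p 2 * q 0 + 4 * p 1 * q 1) - 70 * G 7 * (p 0 * q 1 + p 1 * q 0) +
    70 * G 8 * p 0 * q 0

/-- Seventy times the pairing `(f, p²)^8` of an octavic given by its coefficients with the square of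
a quartic written as in `quarticCoeff`. -/
def octavicSquarePairing (b : Fin 9 → R) (p : Fin 5 → R) : R :=
  70 * b 0 * p 4 ^ 2 - 35 * b 1 * p 3 * p 4 + 5 * b 2 * (p 2 * p 4 + 2 * p 3 ^ 2) -
    5 * b 3 * (p 1 * p 4 + p 2 * p 3) + b 4 * (2 * p 0 * p 4 + 8 * p 1 * p 3 + p 2 ^ 2) -
    5 * b 5 * (p 0 * p 3 + p 1 * p 2) + 5 * b 6 * (p 0 * p 2 + 2 * p 1 ^ 2) - 35 * b 7 * p 0 * p 1 +
    70 * b 8 * p 0 ^ 2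

/-- The `i`-th invariant of the octavic with coefficients `b`, as an integral expression in `b`. -/
def integralJ (i : ℕ) (b : Fin 9 → R) : R :=
  let K := kappaCoeff b
  let H := hCoeff K
  match i with
  | 2 => 280 * b 0 * b 8 - 35 * b 1 * b 7 + 10 * b 2 * b 6 - 5 * b 3 * b 5 + 2 * b 4 ^ 2
  | 3 => 3920 * b 0 * b 4 * b 8 - 2450 * b 0 * b 5 * b 7 + 1050 * b 0 * b 6 ^ 2 -
      2450 * b 1 * b 3 * b 8 + 735 * b 1 * b 4 * b 7 - 175 * b 1 * b 5 * b 6 +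
      1050 * b 2 ^ 2 * b 8 - 175 * b 2 * b 3 * b 7 - 110 * b 2 * b 4 * b 6 + 75 * b 2 * b 5 ^ 2 +
      75 * b 3 ^ 2 * b 6 - 45 * b 3 * b 4 * b 5 + 12 * b 4 ^ 3
  | 4 => quarticPairing K K
  | 5 => mPairing (mCoeff b) K
  | 6 => quarticPairing K H
  | 7 => mPairing (mCoeff b) H
  | 8 => octavicPairing (gCoeff b) K H
  | 9 => octavicSquarePairing b H
  | 10 => octavicPairing (gCoeff b) H H
  | _ => 0

lemma map_integralJ (φ : R →+* S) (i : ℕ) (b : Fin 9 → R) :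
    integralJ i (φ ∘ b) = φ (integralJ i b) := by
  have hκ : kappaCoeff (φ ∘ b) = φ ∘ kappaCoeff b := by
    ext l
    fin_cases l <;> simp [kappaCoeff, map_ofNat]
  have hh (K : Fin 5 → R) : hCoeff (φ ∘ K) = φ ∘ hCoeff K := by
    ext l
    fin_cases l <;> simp [hCoeff, map_ofNat]
  have hg : gCoeff (φ ∘ b) = φ ∘ gCoeff b := by
    ext l
    fin_cases l <;> simp [gCoeff, map_ofNat]
  have hm : mCoeff (φ ∘ b) = φ ∘ mCoeff b := by
    ext l
    fin_cases l <;> simp [mCoeff, map_ofNat]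
  unfold integralJ
  split <;>
    simp [hκ, hh, hg, hm, quarticPairing, mPairing, octavicPairing, octavicSquarePairing,
      map_ofNat]

lemma apolarPairing_two (α β : ℕ → R) :
    apolarPairing 2 α β = α 2 * β 0 - 2 * α 1 * β 1 + α 0 * β 2 := by
  simp only [apolarPairing, Finset.sum_range_succ, Finset.sum_range_zero, Nat.choose]
  ring

lemma apolarPairing_four (α β : ℕ → R) :
    apolarPairing 4 α β =
      α 4 * β 0 - 4 * α 3 * β 1 + 6 * α 2 * β 2 - 4 * α 1 * β 3 + α 0 * β 4 := by
  simp only [apolarPairing, Finset.sum_range_succ, Finset.sum_range_zero, Nat.choose]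
  ring

lemma apolarPairing_six (α β : ℕ → R) :
    apolarPairing 6 α β = α 6 * β 0 - 6 * α 5 * β 1 + 15 * α 4 * β 2 - 20 * α 3 * β 3 +
      15 * α 2 * β 4 - 6 * α 1 * β 5 + α 0 * β 6 := by
  simp only [apolarPairing, Finset.sum_range_succ, Finset.sum_range_zero, Nat.choose]
  ring

lemma apolarPairing_eight (α β : ℕ → R) :
    apolarPairing 8 α β = α 8 * β 0 - 8 * α 7 * β 1 + 28 * α 6 * β 2 - 56 * α 5 * β 3 +
      70 * α 4 * β 4 - 56 * α 3 * β 5 + 28 * α 2 * β 6 - 8 * α 1 * β 7 + α 0 * β 8 := by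
  simp only [apolarPairing, Finset.sum_range_succ, Finset.sum_range_zero, Nat.choose]
  ring

lemma quarticPairing_smul_quarticCoeff (s t : R) (u v : ℕ → R) :
    quarticPairing (s • quarticCoeff u) (t • quarticCoeff v) =
      6 * (s * t) * apolarPairing 4 u v := by
  simp only [quarticPairing, quarticCoeff, apolarPairing_four, Pi.smul_apply, smul_eq_mul,
    Matrix.cons_val]
  ring

lemma octavicOctavicPairing_smul_reducedOctavicCoeff (s : R) (α γ : ℕ → R) :
    octavicOctavicPairing (octavicCoeff α) (s • reducedOctavicCoeff γ) =
      70 * s * apolarPairing 8 α γ := by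
  simp only [octavicOctavicPairing, octavicCoeff, reducedOctavicCoeff, apolarPairing_eight,
    Pi.smul_apply, smul_eq_mul, Matrix.cons_val, Fin.coe_ofNat_eq_mod, Nat.reduceMod, Nat.choose]
  ring

lemma octavicPairing_smul_quarticCoeff (r s t : R) (γ u v : ℕ → R) :
    octavicPairing (r • reducedOctavicCoeff γ) (s • quarticCoeff u) (t • quarticCoeff v) =
      70 * (r * s * t) *
        apolarPairing 4 (fun l => apolarPairing 4 (fun i => γ (i + l)) u) v := by
  simp only [octavicPairing, reducedOctavicCoeff, quarticCoeff, apolarPairing_four, Pi.smul_apply,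
    smul_eq_mul, Matrix.cons_val]
  ring

lemma octavicSquarePairing_smul_quarticCoeff (s : R) (α u : ℕ → R) :
    octavicSquarePairing (octavicCoeff α) (s • quarticCoeff u) =
      70 * s ^ 2 * apolarPairing 4 (fun l => apolarPairing 4 (fun i => α (i + l)) u) u := by
  simp only [octavicSquarePairing, octavicCoeff, quarticCoeff, apolarPairing_four, Pi.smul_apply,
    smul_eq_mul, Matrix.cons_val, Fin.coe_ofNat_eq_mod, Nat.reduceMod, Nat.choose]
  ring

lemma octavicOctavicPairing_gCoeff (b : Fin 9 → R) :
    octavicOctavicPairing b (gCoeff b) = 3 * integralJ 3 b := by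
  simp only [octavicOctavicPairing, gCoeff, integralJ, Matrix.cons_val]
  ring

lemma mCoeff_octavicCoeff (α : ℕ → R) :
    mCoeff (octavicCoeff α) = ![35, 70, 70, 70, 35] * fun l : Fin 5 =>
      kappaCoeff (octavicCoeff α) 0 * α (l + 4) - 2 * kappaCoeff (octavicCoeff α) 1 * α (l + 3) +
        kappaCoeff (octavicCoeff α) 2 * α (l + 2) - 2 * kappaCoeff (octavicCoeff α) 3 * α (l + 1) +
        kappaCoeff (octavicCoeff α) 4 * α l := by
  ext l
  fin_cases l
  all_goals
    simp only [mCoeff, kappaCoeff, octavicCoeff, Pi.mul_apply, Matrix.cons_val, Fin.zero_eta,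
      Fin.mk_one, Fin.reduceFinMk, Fin.coe_ofNat_eq_mod, Nat.reduceMod, Nat.choose]
    ring

end IntegralFormulas

section Octavics

lemma octavicCoeff_surjective (h8 : ((8).factorial : k) ≠ 0) :
    Function.Surjective (octavicCoeff : (ℕ → k) → Fin 9 → k) := by
  intro b
  refine ⟨fun i => b (Fin.ofNat 9 i) / (8).choose i, funext fun i => ?_⟩
  have hi : ((8).choose i : k) ≠ 0 :=
    choose_ne_zero_of_factorial_ne_zero h8 (Nat.le_of_lt_succ i.isLt)
  rw [octavicCoeff, mul_div_cancel₀ _ hi, Fin.ofNat_val_eq_self]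

lemma octForm_octavicCoeff (α : ℕ → k) : octForm (octavicCoeff α) = binForm 8 α := by
  rw [binForm, Finset.sum_range]
  rfl

lemma CharOK.factorial_eight_ne_zero (hk : CharOK k) : ((8).factorial : k) ≠ 0 := by
  have hp {p : ℕ} (hprime : p.Prime) (h : ringChar k ≠ p) : (p : k) ≠ 0 := fun h0 =>
    ((Nat.dvd_prime hprime).1 ((ringChar.spec k p).1 h0)).elim
      (fun h1 => CharP.ringChar_ne_one h1) h
  have h2 := hp Nat.prime_two hk.1
  have h3 := hp Nat.prime_three hk.2.1
  have h5 := hp Nat.prime_five hk.2.2.1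
  have h7 := hp (by norm_num) hk.2.2.2
  have h8 : (8).factorial = 2 ^ 7 * 3 ^ 2 * 5 * 7 := by decide
  rw [h8, Nat.cast_mul, Nat.cast_mul, Nat.cast_mul, Nat.cast_pow, Nat.cast_pow]
  exact mul_ne_zero (mul_ne_zero (mul_ne_zero (pow_ne_zero 7 h2) (pow_ne_zero 2 h3)) h5) h7

/-- The normalized coefficients of the covariant `κ` of the octavic with normalized coefficients
`α`. -/
def kappaSeq (α : ℕ → k) : ℕ → k := transvectantCoeff 2 2 6 α α

/-- The normalized coefficients of the covariant `g` of the octavic with normalized coefficients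
`α`. -/
def gSeq (α : ℕ → k) : ℕ → k := transvectantCoeff 4 4 4 α α

/-- The normalized coefficients of the covariant `h` of the octavic with normalized coefficients
`α`. -/
def hSeq (α : ℕ → k) : ℕ → k := transvectantCoeff 2 2 2 (kappaSeq α) (kappaSeq α)

lemma covk_octavicCoeff (h8 : ((8).factorial : k) ≠ 0) (α : ℕ → k) :
    covk (octavicCoeff α) = binForm 4 (kappaSeq α) := by
  have h4 : ((2 + 2).factorial : k) ≠ 0 := factorial_ne_zero_of_le h8 (by norm_num)
  have h := transvectant_binForm (p := 2) (q := 2) (r := 6) h8 h8 h4 α α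
  simpa only [covk, octForm_octavicCoeff, kappaSeq, Nat.reduceAdd] using h

lemma covg_octavicCoeff (h8 : ((8).factorial : k) ≠ 0) (α : ℕ → k) :
    covg (octavicCoeff α) = binForm 8 (gSeq α) := by
  have h := transvectant_binForm (p := 4) (q := 4) (r := 4) h8 h8 h8 α α
  simpa only [covg, octForm_octavicCoeff, gSeq, Nat.reduceAdd] using h

lemma covh_octavicCoeff (h8 : ((8).factorial : k) ≠ 0) (α : ℕ → k) :
    covh (octavicCoeff α) = binForm 4 (hSeq α) := by
  have h4 : ((2 + 2).factorial : k) ≠ 0 := factorial_ne_zero_of_le h8 (by norm_num)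
  have h := transvectant_binForm (p := 2) (q := 2) (r := 2) h4 h4 h4 (kappaSeq α) (kappaSeq α)
  simpa only [covh, covk_octavicCoeff h8, hSeq, Nat.reduceAdd] using h

lemma transvectantSum_eq_choose_mul {p q l : ℕ} (hl : ((p + q).choose l : k) ≠ 0) (r : ℕ)
    (α β : ℕ → k) :
    transvectantSum p q r α β l = (p + q).choose l * transvectantCoeff p q r α β l :=
  (mul_div_cancel₀ _ hl).symm

lemma two_smul_quarticCoeff_transvectantCoeff (h4 : ((4).factorial : k) ≠ 0) (r : ℕ)
    (α β : ℕ → k) :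
    (2 : k) • quarticCoeff (transvectantCoeff 2 2 r α β) =
      ![2, 1, 2, 1, 2] * fun l : Fin 5 => transvectantSum 2 2 r α β l := by
  ext l
  have hl : ((2 + 2).choose l : k) ≠ 0 :=
    choose_ne_zero_of_factorial_ne_zero h4 (Nat.le_of_lt_succ l.isLt)
  rw [Pi.mul_apply, transvectantSum_eq_choose_mul hl]
  fin_cases l
  all_goals
    simp only [quarticCoeff, Pi.smul_apply, smul_eq_mul, Matrix.cons_val, Fin.zero_eta,
      Fin.mk_one, Fin.reduceFinMk, Nat.reduceAdd, Nat.choose]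
    ring

lemma four_smul_reducedOctavicCoeff_transvectantCoeff (h8 : ((8).factorial : k) ≠ 0) (r : ℕ)
    (α β : ℕ → k) :
    (4 : k) • reducedOctavicCoeff (transvectantCoeff 4 4 r α β) =
      ![4, 1, 2, 1, 4, 1, 2, 1, 4] * fun l : Fin 9 => transvectantSum 4 4 r α β l := by
  ext l
  have hl : ((4 + 4).choose l : k) ≠ 0 :=
    choose_ne_zero_of_factorial_ne_zero h8 (Nat.le_of_lt_succ l.isLt)
  rw [Pi.mul_apply, transvectantSum_eq_choose_mul hl]
  fin_cases l
  all_goals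
    simp only [reducedOctavicCoeff, Pi.smul_apply, smul_eq_mul, Matrix.cons_val, Fin.zero_eta,
      Fin.mk_one, Fin.reduceFinMk, Nat.reduceAdd, Nat.choose]
    ring

lemma kappaCoeff_octavicCoeff (h4 : ((4).factorial : k) ≠ 0) (α : ℕ → k) :
    kappaCoeff (octavicCoeff α) = (784 : k) • quarticCoeff (kappaSeq α) := by
  have h : kappaCoeff (octavicCoeff α) =
      (392 : k) • (![2, 1, 2, 1, 2] * fun l : Fin 5 => transvectantSum 2 2 6 α α l) := by
    ext l
    fin_cases l
    all_goals
      simp only [kappaCoeff, octavicCoeff, transvectantSum, apolarPairing_six, Pi.mul_apply,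
        Pi.smul_apply, smul_eq_mul, Matrix.cons_val, Fin.zero_eta, Fin.mk_one, Fin.reduceFinMk,
        Fin.coe_ofNat_eq_mod, Nat.reduceMod, Finset.Nat.sum_antidiagonal_succ,
        Finset.Nat.antidiagonal_zero, Finset.sum_singleton, Nat.choose]
      ring
  rw [h, ← two_smul_quarticCoeff_transvectantCoeff h4, smul_smul, kappaSeq]
  norm_num

lemma gCoeff_octavicCoeff (h8 : ((8).factorial : k) ≠ 0) (α : ℕ → k) :
    gCoeff (octavicCoeff α) = (1960 : k) • reducedOctavicCoeff (gSeq α) := by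
  have h : gCoeff (octavicCoeff α) = (490 : k) •
      (![4, 1, 2, 1, 4, 1, 2, 1, 4] * fun l : Fin 9 => transvectantSum 4 4 4 α α l) := by
    ext l
    fin_cases l
    all_goals
      simp only [gCoeff, octavicCoeff, transvectantSum, apolarPairing_four, Pi.mul_apply,
        Pi.smul_apply, smul_eq_mul, Matrix.cons_val, Fin.zero_eta, Fin.mk_one, Fin.reduceFinMk,
        Fin.coe_ofNat_eq_mod, Nat.reduceMod, Finset.Nat.sum_antidiagonal_succ,
        Finset.Nat.antidiagonal_zero, Finset.sum_singleton, Nat.choose]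
      ring
  rw [h, ← four_smul_reducedOctavicCoeff_transvectantCoeff h8, smul_smul, gSeq]
  norm_num

lemma hCoeff_smul_quarticCoeff (h4 : ((4).factorial : k) ≠ 0) (s : k) (u : ℕ → k) :
    hCoeff (s • quarticCoeff u) = (6 * s ^ 2) • quarticCoeff (transvectantCoeff 2 2 2 u u) := by
  have h : hCoeff (s • quarticCoeff u) =
      (3 * s ^ 2) • (![2, 1, 2, 1, 2] * fun l : Fin 5 => transvectantSum 2 2 2 u u l) := by
    ext l
    fin_cases l
    all_goals
      simp only [hCoeff, quarticCoeff, transvectantSum, apolarPairing_two, Pi.mul_apply,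
        Pi.smul_apply, smul_eq_mul, Matrix.cons_val, Fin.zero_eta, Fin.mk_one, Fin.reduceFinMk,
        Fin.coe_ofNat_eq_mod, Nat.reduceMod, Finset.Nat.sum_antidiagonal_succ,
        Finset.Nat.antidiagonal_zero, Finset.sum_singleton, Nat.choose]
      ring
  rw [h, ← two_smul_quarticCoeff_transvectantCoeff h4, smul_smul]
  ring_nf

lemma hCoeff_kappaCoeff_octavicCoeff (h4 : ((4).factorial : k) ≠ 0) (α : ℕ → k) :
    hCoeff (kappaCoeff (octavicCoeff α)) = (2 ^ 9 * 3 * 7 ^ 4 : k) • quarticCoeff (hSeq α) := by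
  rw [kappaCoeff_octavicCoeff h4, hCoeff_smul_quarticCoeff h4, hSeq]
  norm_num

lemma mPairing_mCoeff_octavicCoeff (h4 : ((4).factorial : k) ≠ 0) (t : k) (α v : ℕ → k) :
    mPairing (mCoeff (octavicCoeff α)) (t • quarticCoeff v) =
      70 * (784 * t) *
        apolarPairing 4 (fun l => apolarPairing 4 (fun i => α (i + l)) (kappaSeq α)) v := by
  rw [mCoeff_octavicCoeff, kappaCoeff_octavicCoeff h4]
  simp only [mPairing, quarticCoeff, apolarPairing_four, Pi.mul_apply, Pi.smul_apply, smul_eq_mul,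
    Matrix.cons_val, Fin.coe_ofNat_eq_mod, Nat.reduceMod]
  ring

lemma J2_octavicCoeff (h8 : ((8).factorial : k) ≠ 0) (α : ℕ → k) :
    J2 (octavicCoeff α) = integralJ 2 (octavicCoeff α) := by
  rw [J2, octForm_octavicCoeff, constantCoeff_transvectant_binForm h8]
  simp only [integralJ, octavicCoeff, apolarPairing_eight, Fin.coe_ofNat_eq_mod, Nat.reduceMod,
    Nat.choose]
  ring

lemma J3_octavicCoeff (h8 : ((8).factorial : k) ≠ 0) (α : ℕ → k) :
    J3 (octavicCoeff α) = integralJ 3 (octavicCoeff α) := by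
  have h3 : (3 : k) ≠ 0 := by
    simpa using choose_ne_zero_of_factorial_ne_zero
      (factorial_ne_zero_of_le h8 (show 3 ≤ 8 by norm_num)) (show 1 ≤ 3 by norm_num)
  rw [J3, octForm_octavicCoeff, covg_octavicCoeff h8, constantCoeff_transvectant_binForm h8,
    div_mul_eq_mul_div, div_eq_iff h3, mul_comm _ 3, ← octavicOctavicPairing_gCoeff,
    gCoeff_octavicCoeff h8, octavicOctavicPairing_smul_reducedOctavicCoeff]
  ring

theorem Jinv_eq_integralJ (hk : CharOK k) (i : ℕ) (b : Fin 9 → k) : Jinv i b = integralJ i b := by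
  have h8 := hk.factorial_eight_ne_zero
  have h4 : ((4).factorial : k) ≠ 0 := factorial_ne_zero_of_le h8 (by norm_num)
  obtain ⟨α, rfl⟩ := octavicCoeff_surjective h8 b
  have hκ := kappaCoeff_octavicCoeff h4 α
  have hη := hCoeff_kappaCoeff_octavicCoeff h4 α
  have hγ := gCoeff_octavicCoeff h8 α
  have hpair (u v : ℕ → k) := constantCoeff_transvectant_binForm h4 u v
  have hpair₂ (β u v : ℕ → k) : constantCoeff (transvectant 4 4 4
      (transvectant 8 4 4 (binForm 8 β) (binForm 4 u)) (binForm 4 v)) =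
        apolarPairing 4 (fun l => apolarPairing 4 (fun i => β (i + l)) u) v :=
    constantCoeff_transvectant_transvectant_binForm (r := 4) (s := 4) h8 β u v
  unfold Jinv
  split
  · exact J2_octavicCoeff h8 α
  · exact J3_octavicCoeff h8 α
  · rw [J4, covk_octavicCoeff h8, hpair, integralJ, hκ, quarticPairing_smul_quarticCoeff]
    ring
  · rw [J5, covm, octForm_octavicCoeff, covk_octavicCoeff h8, hpair₂, integralJ,
      hκ, mPairing_mCoeff_octavicCoeff h4]
    ring
  · rw [J6, covk_octavicCoeff h8, covh_octavicCoeff h8, hpair, integralJ, hη, hκ,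
      quarticPairing_smul_quarticCoeff]
    ring
  · rw [J7, covm, octForm_octavicCoeff, covk_octavicCoeff h8, covh_octavicCoeff h8, hpair₂,
      integralJ, hη, mPairing_mCoeff_octavicCoeff h4]
    ring
  · rw [J8, covp, covg_octavicCoeff h8, covk_octavicCoeff h8, covh_octavicCoeff h8, hpair₂,
      integralJ, hη, hκ, hγ, octavicPairing_smul_quarticCoeff]
    ring
  · rw [J9, covn, octForm_octavicCoeff, covh_octavicCoeff h8, hpair₂, integralJ, hη,
      octavicSquarePairing_smul_quarticCoeff]
    ring
  · rw [J10, covq, covg_octavicCoeff h8, covh_octavicCoeff h8, hpair₂, integralJ, hη, hγ,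
      octavicPairing_smul_quarticCoeff]
    ring
  · rw [integralJ] <;> assumption

end Octavics

section Integrality

/-- The `i`-th invariant of the octavic, as an integral polynomial in its coefficients. -/
def invariantPoly (i : ℕ) : MvPolynomial (Fin 9) ℤ := integralJ i X

lemma eval₂_invariantPoly {R : Type*} [CommRing R] (φ : ℤ →+* R) (i : ℕ) (b : Fin 9 → R) :
    eval₂ φ b (invariantPoly i) = integralJ i b := by
  have hX : eval₂Hom φ b ∘ X = b := funext fun j => eval₂Hom_X' φ b j
  rw [invariantPoly, ← coe_eval₂Hom, ← map_integralJ, hX]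

lemma charOK_rat : CharOK ℚ := by
  rw [CharOK, ringChar.eq_zero]
  norm_num

lemma isHomogeneous_invariantPoly (i : ℕ) : (invariantPoly i).IsHomogeneous i := by
  have heval (x : Fin 9 → ℤ) :
      (eval x (invariantPoly i) : ℚ) = Jinv i fun j => (x j : ℚ) := by
    rw [Jinv_eq_integralJ charOK_rat, eval, coe_eval₂Hom, eval₂_invariantPoly]
    exact (map_integralJ (Int.castRingHom ℚ) i x).symm
  refine isHomogeneous_of_eval_smul fun t x => Int.cast_injective (α := ℚ) ?_
  rw [heval, Int.cast_mul, Int.cast_pow, heval, ← Jinv_smul]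
  exact congrArg (Jinv i) (funext fun j => Int.cast_mul t (x j))

end Integrality

/-- For a binary octavic `f` and `g ∈ GL₂(k)`, one has `J_i(g(f)) = (det g)^{4i} · J_i(f)`
for `i = 2, ..., 10`; moreover each `J_i` is, as a polynomial in the coefficients
`a_0, ..., a_8`, homogeneous of degree `i` with integer coefficients. -/
theorem Jinv_transform (k : Type*) [Field k] (hk : CharOK k) (a : Fin 9 → k)
    (g : Matrix (Fin 2) (Fin 2) k) (hg : g.det ≠ 0) :
    ∀ i : ℕ, 2 ≤ i → i ≤ 10 →
      Jinv i (octAct g a) = g.det ^ (4 * i) * Jinv i a ∧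
      ∃ P : MvPolynomial (Fin 9) ℤ, P.IsHomogeneous i ∧
        ∀ b : Fin 9 → k, Jinv i b = eval₂ (Int.castRingHom k) b P := by
  intro i _ _
  refine ⟨Jinv_octAct g i a, invariantPoly i, isHomogeneous_invariantPoly i, fun b => ?_⟩
  rw [eval₂_invariantPoly, Jinv_eq_integralJ hk]
end
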